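/- (CLT for the RWG in the degenerate case p = 0.) Suppose p = 0. Then as n → ∞, (S_n − n(μ + ρ))/√n converges in distribution to the centered Gaussian law N(0, σ² + δ) on ℝ³. -/

import Mathlib

open MeasureTheory ProbabilityTheory Real Filter Set
open scoped BigOperators NNReal

noncomputable section

namespace RWG

abbrev E : Type := EuclideanSpace ℝ (Fin 3)

def vec (x y z : ℝ) : E := (EuclideanSpace.equiv (Fin 3) ℝ).symm ![x, y, z]

/-- The four families of vertices of the `2h` graphite lattice. -/
def V (a h : ℝ) (i j : Fin 2) : Set E :=
  {v | ∃ k l n : ℤ, v =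
    vec (a * ((-1 : ℝ) ^ ((i : ℕ) + 1) * (if j = 1 then (1 : ℝ) else 0) + (3 / 2) * k))
        (a * ((Real.sqrt 3 / 2) * k + Real.sqrt 3 * l))
        (h * (2 * n + (if i ≠ j then (1 : ℝ) else 0)))}

/-- Horizontal jump from a vertex of horizontal type `i` in direction `k`. -/
def w (a : ℝ) (i : Fin 2) (k : Fin 3) : E :=
  vec (a * Real.cos (2 * (k : ℕ) * π / 3 + (i : ℕ) * π))
      (a * Real.sin (2 * (k : ℕ) * π / 3 + (i : ℕ) * π)) 0

/-- `S` is a random walk on graphite with parameters `a, h, p, α, q` and natural filtration `F`. -/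
structure IsRWG {Ω : Type} [MeasurableSpace Ω] (P : Measure Ω)
    (a h p α : ℝ) (q : Fin 2 → Fin 2 → Fin 3 → ℝ)
    (S : ℕ → Ω → E) (F : ℕ → MeasurableSpace Ω) : Prop where
  prob : IsProbabilityMeasure P
  ha : 0 < a
  hh : 0 < h
  hp0 : 0 ≤ p
  hp1 : p ≤ 1
  hα0 : 0 < α
  hα1 : α < 1
  hq : ∀ i j k, 0 ≤ q i j k
  hqsum0 : ∀ i, q i 0 0 + q i 0 1 + q i 0 2 = 1 - p
  hqsum1 : ∀ i, q i 1 0 + q i 1 1 + q i 1 2 = 1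
  hS0 : ∀ ω, S 0 ω = 0
  hSmeas : ∀ n, Measurable (S n)
  hF : ∀ n, F n =
    MeasurableSpace.comap (fun ω (k : Fin n) => S ((k : ℕ) + 1) ω - S (k : ℕ) ω)
      MeasurableSpace.pi
  hTrans : ∀ (n : ℕ) (f : E → ℝ), Measurable f → (∃ C, ∀ x, |f x| ≤ C) →
    P[fun ω => f (S (n + 1) ω)|F n] =ᵐ[P]
      fun ω => ∑ i : Fin 2,
        ((V a h i 0).indicator (fun _ => (1 : ℝ)) (S n ω) *
          (α * p * f (S n ω + vec 0 0 h) + (1 - α) * p * f (S n ω + vec 0 0 (-h)) +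
            ∑ k : Fin 3, q i 0 k * f (S n ω + w a i k)) +
        (V a h i 1).indicator (fun _ => (1 : ℝ)) (S n ω) *
          ∑ k : Fin 3, q i 1 k * f (S n ω + w a i k))

def uu (q : Fin 2 → Fin 2 → Fin 3 → ℝ) (i j : Fin 2) : ℝ := q i j 1 + q i j 2

def vv (q : Fin 2 → Fin 2 → Fin 3 → ℝ) (i j : Fin 2) : ℝ := q i j 1 - q i j 2

def ss (q : Fin 2 → Fin 2 → Fin 3 → ℝ) (i j : Fin 2) : ℝ := uu q i j * (1 - uu q i j)

def tt (q : Fin 2 → Fin 2 → Fin 3 → ℝ) (i j : Fin 2) : ℝ := vv q i j * (uu q i j - 1)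

/-- The vector `μ` of the RWG. -/
def muG (a h p α : ℝ) (q : Fin 2 → Fin 2 → Fin 3 → ℝ) : E :=
  vec (3 * a / 8 * (-(uu q 0 0 + uu q 0 1) + (uu q 1 0 + uu q 1 1)))
      (a * Real.sqrt 3 / 8 * ((vv q 0 0 + vv q 0 1) - (vv q 1 0 + vv q 1 1)))
      (h * p / 2 * (2 * α - 1))

/-- The vector `m` of the RWG. -/
def mG (a h p α : ℝ) (q : Fin 2 → Fin 2 → Fin 3 → ℝ) : E :=
  vec (3 * a / 8 * (-(uu q 0 0 - uu q 0 1) + (uu q 1 0 - uu q 1 1)))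
      (a * Real.sqrt 3 / 8 * ((vv q 0 0 - vv q 0 1) - (vv q 1 0 - vv q 1 1)))
      (h * p / 2 * (2 * α - 1))

/-- The vector `θ` of the RWG. -/
def thetaG (a p : ℝ) (q : Fin 2 → Fin 2 → Fin 3 → ℝ) : E :=
  vec (a * ((1 - p / 2) - 3 / 8 * ((uu q 0 0 + uu q 0 1) + (uu q 1 0 + uu q 1 1))))
      (a * Real.sqrt 3 / 8 * ((vv q 0 0 + vv q 0 1) + (vv q 1 0 + vv q 1 1))) 0

/-- The vector `ρ` of the RWG. -/
def rhoG (a p : ℝ) (q : Fin 2 → Fin 2 → Fin 3 → ℝ) : E :=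
  vec (a * (-(p / 2) - 3 / 8 * ((uu q 0 0 - uu q 0 1) + (uu q 1 0 - uu q 1 1))))
      (a * Real.sqrt 3 / 8 * ((vv q 0 0 - vv q 0 1) + (vv q 1 0 - vv q 1 1))) 0

/-- The vector `ζ = (0, 0, hp(2α−1))`. -/
def zetaG (h p α : ℝ) : E := vec 0 0 (h * p * (2 * α - 1))

/-- The indicator process `i_n`. -/
def iP {Ω : Type} (a h : ℝ) (S : ℕ → Ω → E) (n : ℕ) (ω : Ω) : ℝ :=
  (V a h 0 0 ∪ V a h 0 1).indicator (fun _ => (1 : ℝ)) (S n ω) -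
    (V a h 1 0 ∪ V a h 1 1).indicator (fun _ => (1 : ℝ)) (S n ω)

/-- The indicator process `j_n`. -/
def jP {Ω : Type} (a h : ℝ) (S : ℕ → Ω → E) (n : ℕ) (ω : Ω) : ℝ :=
  (V a h 0 0 ∪ V a h 1 0).indicator (fun _ => (1 : ℝ)) (S n ω) -
    (V a h 0 1 ∪ V a h 1 1).indicator (fun _ => (1 : ℝ)) (S n ω)

/-- The indicator process `k_n`. -/
def kP {Ω : Type} (a h : ℝ) (S : ℕ → Ω → E) (n : ℕ) (ω : Ω) : ℝ :=
  (V a h 0 0 ∪ V a h 1 1).indicator (fun _ => (1 : ℝ)) (S n ω) -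
    (V a h 0 1 ∪ V a h 1 0).indicator (fun _ => (1 : ℝ)) (S n ω)

/-- The matrix `σ²` of the RWG. -/
def sigmaG (a h p α : ℝ) (q : Fin 2 → Fin 2 → Fin 3 → ℝ) : Matrix (Fin 3) (Fin 3) ℝ :=
  !![a ^ 2 / 4 * (2 * p * (1 - p) + 9 / 4 * (ss q 0 0 + ss q 1 0 + ss q 0 1 + ss q 1 1)
        - 3 * p * (uu q 0 0 + uu q 1 0)),
     a ^ 2 * Real.sqrt 3 / 16 * (3 * (tt q 0 0 + tt q 1 0 + tt q 0 1 + tt q 1 1)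
        + 2 * p * (vv q 0 0 + vv q 1 0)),
     a * h / 8 * (-4 * p * (1 - p) * (2 * α - 1)
        + 3 * p * (2 * α - 1) * (uu q 0 0 + uu q 1 0));
     a ^ 2 * Real.sqrt 3 / 16 * (3 * (tt q 0 0 + tt q 1 0 + tt q 0 1 + tt q 1 1)
        + 2 * p * (vv q 0 0 + vv q 1 0)),
     3 * a ^ 2 / 16 * ((uu q 0 0 + uu q 1 0 + uu q 0 1 + uu q 1 1)
        - ((vv q 0 0) ^ 2 + (vv q 1 0) ^ 2 + (vv q 0 1) ^ 2 + (vv q 1 1) ^ 2)),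
     -(a * h * Real.sqrt 3 / 8) * (p * (2 * α - 1) * (vv q 0 0 + vv q 1 0));
     a * h / 8 * (-4 * p * (1 - p) * (2 * α - 1)
        + 3 * p * (2 * α - 1) * (uu q 0 0 + uu q 1 0)),
     -(a * h * Real.sqrt 3 / 8) * (p * (2 * α - 1) * (vv q 0 0 + vv q 1 0)),
     h ^ 2 * p / 2 * (1 - p * (2 * α - 1) ^ 2)]

/-- The matrix `γ` of the RWG. -/
def gammaG (a h p α : ℝ) (q : Fin 2 → Fin 2 → Fin 3 → ℝ) : Matrix (Fin 3) (Fin 3) ℝ :=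
  !![a ^ 2 / 4 * (2 * p * (1 - p) + 9 / 4 * (ss q 0 0 + ss q 1 0 - ss q 0 1 - ss q 1 1)
        - 3 * p * (uu q 0 0 + uu q 1 0)),
     a ^ 2 * Real.sqrt 3 / 16 * (3 * (tt q 0 0 + tt q 1 0 - tt q 0 1 - tt q 1 1)
        + 2 * p * (vv q 0 0 + vv q 1 0)),
     a * h / 8 * (-4 * p * (1 - p) * (2 * α - 1)
        + 3 * p * (2 * α - 1) * (uu q 0 0 + uu q 1 0));
     a ^ 2 * Real.sqrt 3 / 16 * (3 * (tt q 0 0 + tt q 1 0 - tt q 0 1 - tt q 1 1)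
        + 2 * p * (vv q 0 0 + vv q 1 0)),
     3 * a ^ 2 / 16 * ((uu q 0 0 + uu q 1 0 - uu q 0 1 - uu q 1 1)
        - ((vv q 0 0) ^ 2 + (vv q 1 0) ^ 2 - (vv q 0 1) ^ 2 - (vv q 1 1) ^ 2)),
     -(a * h * Real.sqrt 3 / 8) * (p * (2 * α - 1) * (vv q 0 0 + vv q 1 0));
     a * h / 8 * (-4 * p * (1 - p) * (2 * α - 1)
        + 3 * p * (2 * α - 1) * (uu q 0 0 + uu q 1 0)),
     -(a * h * Real.sqrt 3 / 8) * (p * (2 * α - 1) * (vv q 0 0 + vv q 1 0)),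
     h ^ 2 * p / 2 * (1 - p * (2 * α - 1) ^ 2)]

/-- The matrix `δ` of the RWG. -/
def deltaG (a h p α : ℝ) (q : Fin 2 → Fin 2 → Fin 3 → ℝ) : Matrix (Fin 3) (Fin 3) ℝ :=
  !![a ^ 2 / 4 * (9 / 4 * (ss q 0 0 - ss q 1 0 - ss q 0 1 + ss q 1 1)
        - 3 * p * (uu q 0 0 - uu q 1 0)),
     a ^ 2 * Real.sqrt 3 / 16 * (3 * (tt q 0 0 - tt q 1 0 - tt q 0 1 + tt q 1 1)
        + 2 * p * (vv q 0 0 - vv q 1 0)),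
     a * h / 8 * (3 * p * (2 * α - 1) * (uu q 0 0 - uu q 1 0));
     a ^ 2 * Real.sqrt 3 / 16 * (3 * (tt q 0 0 - tt q 1 0 - tt q 0 1 + tt q 1 1)
        + 2 * p * (vv q 0 0 - vv q 1 0)),
     3 * a ^ 2 / 16 * ((uu q 0 0 - uu q 1 0 - uu q 0 1 + uu q 1 1)
        - ((vv q 0 0) ^ 2 - (vv q 1 0) ^ 2 - (vv q 0 1) ^ 2 + (vv q 1 1) ^ 2)),
     -(a * h * Real.sqrt 3 / 8) * (p * (2 * α - 1) * (vv q 0 0 - vv q 1 0));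
     a * h / 8 * (3 * p * (2 * α - 1) * (uu q 0 0 - uu q 1 0)),
     -(a * h * Real.sqrt 3 / 8) * (p * (2 * α - 1) * (vv q 0 0 - vv q 1 0)),
     0]

/-- A probability measure on `ℝ³` is the centered Gaussian law with covariance matrix `Γ`
if every linear functional pushes it to the corresponding one-dimensional Gaussian law. -/
def IsCenteredGaussian (G : Measure E) (Γ : Matrix (Fin 3) (Fin 3) ℝ) : Prop :=
  IsProbabilityMeasure G ∧
    ∀ u : Fin 3 → ℝ, G.map (fun x => ∑ r, u r * x r) =
      gaussianReal 0 (Real.toNNReal (∑ r, ∑ c, u r * Γ r c * u c))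

/-- View a point of `ℝ³` as a plain function on indices. -/
def toFun (x : E) : Fin 3 → ℝ := x

end RWG

/-!
When `p = 0` the walk stays in its layer and its position alternates between `V_{0,0}` and
`V_{1,1}`, so `S_{n+2} - S_n` is independent of `S_n` and distributed as the convolution `η` of the
two jump laws. Writing `S_n` as a sum over blocks of two steps, the characteristic function of its
recentered law is a bounded number of factors tending to `1` times the `⌊n/2⌋`-th power of that of
`η - 2(μ + ρ)`. A second-order Taylor expansion at the origin and Lévy's continuity theorem then
give the Gaussian limit, and since `η` has mean `2(μ + ρ)` and covariance `2(σ² + δ)`, its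
covariance is `σ² + δ`.
-/

namespace RWG

open Asymptotics
open scoped Topology InnerProductSpace Matrix

lemma tendsto_pow_cexp {ι : Type*} {l : Filter ι} {f : ι → ℂ} {k : ι → ℕ} {c : ℂ}
    (hf : Tendsto f l (𝓝 1)) (hk : Tendsto (fun i => k i * (f i - 1)) l (𝓝 c)) :
    Tendsto (fun i => f i ^ k i) l (𝓝 (Complex.exp c)) := by
  have hf0 : Tendsto (fun i => f i - 1) l (𝓝 0) := by simpa using hf.sub_const 1
  have hlog : (fun i => Complex.log (f i) - (f i - 1)) =O[l] fun i => (f i - 1) ^ 2 := by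
    simpa [Function.comp_def] using Complex.log_sub_self_isBigO.comp_tendsto hf0
  have herr : Tendsto (fun i => k i * (Complex.log (f i) - (f i - 1))) l (𝓝 0) := by
    refine ((isBigO_refl (fun i => (k i : ℂ)) l).mul hlog).trans_tendsto ?_
    simpa [pow_two, mul_assoc] using hk.mul hf0
  have hklog : Tendsto (fun i => k i * Complex.log (f i)) l (𝓝 c) := by
    simpa [← mul_add] using herr.add hk
  refine ((Complex.continuous_exp.tendsto c).comp hklog).congr' ?_
  filter_upwards [hf.eventually_ne one_ne_zero] with i hi
  rw [Function.comp_apply, Complex.exp_nat_mul, Complex.exp_log hi]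

lemma tendsto_natCast_div_mul_inv_sqrt_sq (d : ℕ) :
    Tendsto (fun n : ℕ => (n / d : ℕ) * (√n)⁻¹ ^ 2) atTop (𝓝 (d : ℝ)⁻¹) := by
  have := (tendsto_nat_floor_mul_div_atTop (R := ℝ) (a := (d : ℝ)⁻¹) (by positivity)).comp
    tendsto_natCast_atTop_atTop
  refine this.congr fun n => ?_
  rw [Function.comp_apply, inv_mul_eq_div, Nat.floor_div_eq_div, inv_pow,
    Real.sq_sqrt n.cast_nonneg, div_eq_mul_inv]

lemma tendsto_mod_of_forall_lt {α : Type*} {l : Filter α} {f : ℕ → ℕ → α} {d : ℕ} (hd : d ≠ 0)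
    (hf : ∀ r < d, Tendsto (f r) atTop l) : Tendsto (fun n => f (n % d) n) atTop l := by
  intro s hs
  have hall : ∀ᶠ n in atTop, ∀ r ∈ Finset.range d, f r n ∈ s :=
    (Finset.eventually_all _).2 fun r hr => hf r (Finset.mem_range.1 hr) hs
  refine mem_map.2 (hall.mono fun n hn => ?_)
  exact hn _ (Finset.mem_range.2 (n.mod_lt (Nat.pos_of_ne_zero hd)))

lemma tendsto_integral_comp_of_tendstoInDistribution {ι Ω Ω' H : Type*} [MeasurableSpace Ω]
    [MeasurableSpace Ω'] [TopologicalSpace H] [MeasurableSpace H] [OpensMeasurableSpace H]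
    {P : Measure Ω} {P' : Measure Ω'} [IsProbabilityMeasure P] [IsProbabilityMeasure P']
    {X : ι → Ω → H} {Z : Ω' → H} {l : Filter ι}
    (h : TendstoInDistribution X l Z (fun _ => P) P') (f : BoundedContinuousFunction H ℝ) :
    Tendsto (fun i => ∫ ω, f (X i ω) ∂P) l (𝓝 (∫ ω, f (Z ω) ∂P')) := by
  have := ProbabilityMeasure.tendsto_iff_forall_integral_tendsto.1 h.tendsto f
  simpa [integral_map (h.forall_aemeasurable _) f.continuous.aestronglyMeasurable,
    integral_map h.aemeasurable_limit f.continuous.aestronglyMeasurable] using this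

section Convolution

variable {M : Type*} [AddMonoid M] [MeasurableSpace M] [MeasurableAdd₂ M]

lemma ae_mem_conv {μ ν : Measure M} {s t u : Set M}
    (hu : MeasurableSet u) (hst : ∀ x ∈ s, ∀ y ∈ t, x + y ∈ u)
    (hs : ∀ᵐ x ∂μ, x ∈ s) (ht : ∀ᵐ y ∂ν, y ∈ t) : ∀ᵐ z ∂(μ ∗ ν), z ∈ u := by
  refine (ae_map_iff measurable_add.aemeasurable hu).2 ?_
  filter_upwards [Measure.quasiMeasurePreserving_fst.ae hs,
    Measure.quasiMeasurePreserving_snd.ae ht] with z h₁ h₂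
  exact hst _ h₁ _ h₂

lemma map_sub_add_conv {M : Type*} [AddCommGroup M] [MeasurableSpace M] [MeasurableAdd₂ M]
    [MeasurableSub M] (μ ν : Measure M) [SFinite μ] [SFinite ν] (x y : M) :
    (μ ∗ ν).map (· - (x + y)) = μ.map (· - x) ∗ ν.map (· - y) := by
  rw [Measure.conv, Measure.conv, Measure.map_prod_map _ _ (by fun_prop) (by fun_prop),
    Measure.map_map (by fun_prop) (by fun_prop), Measure.map_map (by fun_prop) (by fun_prop)]
  congr 1
  ext z
  exact add_sub_add_comm z.1 z.2 x y

end Convolution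

section ConvolutionMoments

variable {H : Type*} [NormedAddCommGroup H] [MeasurableSpace H] [BorelSpace H]
  [SecondCountableTopology H] {μ ν : Measure H}

lemma memLp_id_conv [IsFiniteMeasure μ] [IsFiniteMeasure ν] {r : ENNReal} (hμ : MemLp id r μ)
    (hν : MemLp id r ν) : MemLp id r (μ ∗ ν) :=
  (memLp_map_measure_iff (by fun_prop) (by fun_prop)).2 ((hμ.comp_fst ν).add (hν.comp_snd μ))

lemma memLp_id_map_sub_const [IsFiniteMeasure μ] {r : ENNReal} (hμ : MemLp id r μ)
    (c : H) : MemLp id r (μ.map (· - c)) :=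
  (memLp_map_measure_iff (by fun_prop) (by fun_prop)).2 (hμ.sub (memLp_const c))

lemma integral_id_conv [NormedSpace ℝ H] [IsProbabilityMeasure μ] [IsProbabilityMeasure ν]
    (hμ : Integrable id μ) (hν : Integrable id ν) :
    ∫ x, x ∂(μ ∗ ν) = ∫ x, x ∂μ + ∫ x, x ∂ν := by
  rw [Measure.conv, integral_map (by fun_prop) (by fun_prop)]
  exact (integral_add (hμ.comp_fst ν) (hν.comp_snd μ)).trans
    (by simp [integral_fun_fst (f := fun x : H => x), integral_fun_snd (f := fun x : H => x)])

lemma integral_id_map_sub_const [NormedSpace ℝ H] [CompleteSpace H] [IsProbabilityMeasure μ]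
    (hμ : Integrable id μ) (c : H) :
    ∫ x, x ∂(μ.map (· - c)) = (∫ x, x ∂μ) - c := by
  rw [integral_map (by fun_prop) (by fun_prop)]
  exact (integral_sub hμ (integrable_const c)).trans (by simp)

lemma covarianceBilin_conv_self [InnerProductSpace ℝ H] [CompleteSpace H]
    [IsProbabilityMeasure μ] [IsProbabilityMeasure ν] (hμ : MemLp id 2 μ) (hν : MemLp id 2 ν)
    (t : H) :
    covarianceBilin (μ ∗ ν) t t = covarianceBilin μ t t + covarianceBilin ν t t := by
  rw [covarianceBilin_self (memLp_id_conv hμ hν), covarianceBilin_self hμ, covarianceBilin_self hν,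
    Measure.conv, variance_map (by fun_prop) (by fun_prop)]
  refine Eq.trans ?_ (variance_add_prod (hμ.const_inner t) (hν.const_inner t))
  simp [Function.comp_def, inner_add_right]

end ConvolutionMoments

section DiscreteLaw

variable {ι M : Type*} [Fintype ι] [MeasurableSpace M]

/-- The law of a random point that equals `c i` with probability `p i`; a negative weight counts
as `0`. -/
def discreteLaw (p : ι → ℝ) (c : ι → M) : Measure M :=
  ∑ i, ENNReal.ofReal (p i) • Measure.dirac (c i)

variable {p : ι → ℝ} {c : ι → M}

lemma isProbabilityMeasure_discreteLaw (hp : ∀ i, 0 ≤ p i) (hp1 : ∑ i, p i = 1) :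
    IsProbabilityMeasure (discreteLaw p c) where
  measure_univ := by
    simp [discreteLaw, ← ENNReal.ofReal_sum_of_nonneg fun i _ => hp i, hp1]

variable [MeasurableSingletonClass M]

lemma ae_discreteLaw {r : M → Prop} (h : ∀ i, r (c i)) : ∀ᵐ x ∂discreteLaw p c, r x := by
  simp only [discreteLaw, ae_finsetSum_measure_iff]
  refine fun i _ => Measure.ae_smul_measure ?_ _
  simpa [ae_dirac_eq] using h i

variable {H : Type*} [NormedAddCommGroup H]

lemma integral_discreteLaw [NormedSpace ℝ H] [CompleteSpace H] (hp : ∀ i, 0 ≤ p i) (f : M → H) :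
    ∫ x, f x ∂discreteLaw p c = ∑ i, p i • f (c i) := by
  rw [discreteLaw, integral_finsetSum_measure fun i _ =>
    (integrable_dirac (by simp)).smul_measure ENNReal.ofReal_ne_top]
  simp [integral_smul_measure, ENNReal.toReal_ofReal, hp]

end DiscreteLaw

lemma memLp_id_discreteLaw {ι H : Type*} [Fintype ι] [NormedAddCommGroup H] [MeasurableSpace H]
    [BorelSpace H] [SecondCountableTopology H] (p : ι → ℝ) (c : ι → H) (r : ENNReal) :
    MemLp id r (discreteLaw p c) := by
  have : IsFiniteMeasure (discreteLaw p c) :=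
    ⟨by simp [discreteLaw, ENNReal.sum_lt_top]⟩
  refine MemLp.of_bound (by fun_prop) (∑ i, ‖c i‖) (ae_discreteLaw fun i => ?_)
  exact Finset.single_le_sum (f := fun i => ‖c i‖) (fun _ _ => norm_nonneg _) (Finset.mem_univ i)

lemma covarianceBilin_discreteLaw_self {ι H : Type*} [Fintype ι] [NormedAddCommGroup H]
    [InnerProductSpace ℝ H] [CompleteSpace H] [MeasurableSpace H] [BorelSpace H]
    [SecondCountableTopology H] {p : ι → ℝ} (hp : ∀ i, 0 ≤ p i) (hp1 : ∑ i, p i = 1)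
    (c : ι → H) (t : H) :
    covarianceBilin (discreteLaw p c) t t
      = ∑ i, p i * ⟪t, c i⟫_ℝ ^ 2 - (∑ i, p i * ⟪t, c i⟫_ℝ) ^ 2 := by
  have := isProbabilityMeasure_discreteLaw (c := c) hp hp1
  have hc := memLp_id_discreteLaw p c 2
  rw [covarianceBilin_self hc]
  refine (variance_eq_sub (hc.const_inner t)).trans ?_
  simp [integral_discreteLaw hp]

section CentralLimit

variable {H : Type*} [NormedAddCommGroup H] [InnerProductSpace ℝ H] [MeasurableSpace H]
  [BorelSpace H]

lemma charFun_map_inner (μ : Measure H) (t : H) (s : ℝ) :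
    charFun (μ.map fun x => ⟪t, x⟫_ℝ) s = charFun μ (s • t) := by
  rw [charFun_eq_charFunDual_toDualMap (s • t), map_smul]
  exact charFun_map_eq_charFunDual_smul (InnerProductSpace.toDualMap ℝ H t) s

lemma isLittleO_charFun_smul_sub [CompleteSpace H] {η : Measure H}
    [IsProbabilityMeasure η] (hη : MemLp id 2 η) (h0 : ∫ x, x ∂η = 0) (t : H) :
    (fun s : ℝ => charFun η (s • t) - (1 - covarianceBilin η t t * s ^ 2 / 2))
      =o[𝓝 0] fun s => s ^ 2 := by
  have hL : AEMeasurable (fun x => ⟪t, x⟫_ℝ) η := by fun_prop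
  have : IsProbabilityMeasure (η.map fun x => ⟪t, x⟫_ℝ) := Measure.isProbabilityMeasure_map hL
  have hLp : MemLp (fun x => ⟪t, x⟫_ℝ) 2 η := hη.const_inner t
  have hLp' : MemLp id 2 (η.map fun x => ⟪t, x⟫_ℝ) :=
    (memLp_map_measure_iff (by fun_prop) hL).2 hLp
  have hmean : ∫ x, ⟪t, x⟫_ℝ ∂η = 0 := by
    rw [integral_inner (f := fun x => x) (hη.integrable one_le_two), h0, inner_zero_right]
  have hvar : ∫ x, ((fun x => ⟪t, x⟫_ℝ) ^ 2) x ∂η = covarianceBilin η t t := by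
    rw [covarianceBilin_self hη, variance_of_integral_eq_zero hL hmean]
    rfl
  have := taylor_isLittleO_univ (x₀ := 0) (contDiff_charFun (n := 2) hLp')
  simpa only [charFun_map_inner, taylorWithinEval_charFun_two_zero hL hLp', hmean, hvar,
    Complex.ofReal_zero, zero_mul, add_zero, sub_zero] using this

lemma tendsto_charFun_smul_pow [CompleteSpace H] {η : Measure H}
    [IsProbabilityMeasure η] (hη : MemLp id 2 η) (h0 : ∫ x, x ∂η = 0)
    {ι : Type*} {l : Filter ι} {k : ι → ℕ} {s : ι → ℝ} {κ : ℝ} (hs : Tendsto s l (𝓝 0))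
    (hκ : Tendsto (fun i => k i * s i ^ 2) l (𝓝 κ)) (t : H) :
    Tendsto (fun i => charFun η (s i • t) ^ k i) l
      (𝓝 (Complex.exp (-(κ * covarianceBilin η t t / 2)))) := by
  have hκ' : Tendsto (fun i => (k i : ℂ) * s i ^ 2) l (𝓝 κ) := by
    simpa [Function.comp_def] using (Complex.continuous_ofReal.tendsto κ).comp hκ
  have htaylor := (isLittleO_charFun_smul_sub hη h0 t).comp_tendsto hs
  have herr : Tendsto (fun i => k i *
      (charFun η (s i • t) - (1 - covarianceBilin η t t * s i ^ 2 / 2))) l (𝓝 0) := by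
    have hκO : (fun i => k i * s i ^ 2) =O[l] fun _ => (1 : ℝ) := hκ.isBigO_one ℝ
    refine (isLittleO_one_iff ℝ).1 (IsLittleO.trans_isBigO ?_ hκO)
    exact (IsBigO.of_norm_le fun i => by simp).mul_isLittleO htaylor
  refine tendsto_pow_cexp ?_ ?_
  · have : IsProbabilityMeasure (η.map fun x => ⟪t, x⟫_ℝ) :=
      Measure.isProbabilityMeasure_map (by fun_prop)
    have hcont := (continuous_charFun (μ := η.map fun x => ⟪t, x⟫_ℝ)).tendsto 0
    simpa [charFun_map_inner, Function.comp_def] using hcont.comp hs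
  · convert herr.add (hκ'.mul_const (-(covarianceBilin η t t / 2 : ℂ))) using 2 <;> ring

lemma charFun_eq_of_add_eq_conv [SecondCountableTopology H] {μ : ℕ → Measure H} {η : Measure H}
    [∀ n, IsFiniteMeasure (μ n)] [IsFiniteMeasure η] {d : ℕ} (h : ∀ n, μ (n + d) = μ n ∗ η)
    (n : ℕ) (t : H) : charFun (μ n) t = charFun (μ (n % d)) t * charFun η t ^ (n / d) := by
  have hmul (r m : ℕ) : charFun (μ (r + d * m)) t = charFun (μ r) t * charFun η t ^ m := by
    induction m with
    | zero => simp
    | succ m ih => rw [Nat.mul_succ, ← add_assoc, h, charFun_conv, ih, pow_succ, mul_assoc]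
  conv_lhs => rw [← Nat.mod_add_div n d, hmul]

lemma tendsto_charFun_of_add_eq_conv [SecondCountableTopology H] [CompleteSpace H]
    {μ : ℕ → Measure H} {η : Measure H} [∀ n, IsProbabilityMeasure (μ n)]
    [IsProbabilityMeasure η] {d : ℕ} (hd : d ≠ 0) (h : ∀ n, μ (n + d) = μ n ∗ η)
    (hη : MemLp id 2 η) (h0 : ∫ x, x ∂η = 0) (t : H) :
    Tendsto (fun n : ℕ => charFun (μ n) ((√n)⁻¹ • t)) atTop
      (𝓝 (Complex.exp (-((d : ℝ)⁻¹ * covarianceBilin η t t / 2)))) := by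
  have hs : Tendsto (fun n : ℕ => (√n)⁻¹) atTop (𝓝 0) :=
    tendsto_inv_atTop_zero.comp (Real.tendsto_sqrt_atTop.comp tendsto_natCast_atTop_atTop)
  have hst : Tendsto (fun n : ℕ => (√n)⁻¹ • t) atTop (𝓝 0) := by
    simpa using hs.smul_const t
  have hinit : Tendsto (fun n : ℕ => charFun (μ (n % d)) ((√n)⁻¹ • t)) atTop (𝓝 1) :=
    tendsto_mod_of_forall_lt hd fun r _ => by
      simpa [Function.comp_def] using ((continuous_charFun (μ := μ r)).tendsto 0).comp hst
  have hpow := tendsto_charFun_smul_pow hη h0 hs (tendsto_natCast_div_mul_inv_sqrt_sq d) t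
  simpa only [← charFun_eq_of_add_eq_conv h, one_mul, Complex.ofReal_inv] using hinit.mul hpow

lemma tendsto_charFun_map_sub_of_add_eq_conv [SecondCountableTopology H] [CompleteSpace H]
    {μ : ℕ → Measure H} {η : Measure H} [∀ n, IsProbabilityMeasure (μ n)]
    [IsProbabilityMeasure η] {d : ℕ} {v : H} (hd : d ≠ 0) (h : ∀ n, μ (n + d) = μ n ∗ η)
    (hη : MemLp id 2 η) (hv : ∫ x, x ∂η = (d : ℝ) • v) (t : H) :
    Tendsto (fun n : ℕ => charFun ((μ n).map (· - (n : ℝ) • v)) ((√n)⁻¹ • t)) atTop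
      (𝓝 (Complex.exp (-((d : ℝ)⁻¹ * covarianceBilin η t t / 2)))) := by
  have (n : ℕ) : IsProbabilityMeasure ((μ n).map (· - (n : ℝ) • v)) :=
    Measure.isProbabilityMeasure_map (by fun_prop)
  have : IsProbabilityMeasure (η.map (· - (d : ℝ) • v)) :=
    Measure.isProbabilityMeasure_map (by fun_prop)
  have hrec (n : ℕ) : (μ (n + d)).map (· - ((n + d : ℕ) : ℝ) • v)
      = (μ n).map (· - (n : ℝ) • v) ∗ η.map (· - (d : ℝ) • v) := by
    rw [h, Nat.cast_add, add_smul, map_sub_add_conv]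
  have hmean : ∫ x, x ∂(η.map (· - (d : ℝ) • v)) = 0 := by
    rw [integral_id_map_sub_const (hη.integrable one_le_two), hv, sub_self]
  have hcov : covarianceBilin (η.map (· - (d : ℝ) • v)) = covarianceBilin η := by
    simp only [sub_eq_neg_add, covarianceBilin_map_const_add]
  simpa only [hcov] using
    tendsto_charFun_of_add_eq_conv hd hrec (memLp_id_map_sub_const hη _) hmean t

theorem tendstoInDistribution_inv_sqrt_smul_sub [FiniteDimensional ℝ H]
    {Ω Ω' : Type*} [MeasurableSpace Ω] [MeasurableSpace Ω'] {P : Measure Ω} {P' : Measure Ω'}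
    [IsProbabilityMeasure P] [IsProbabilityMeasure P'] {G η : Measure H} [IsGaussian G]
    [IsProbabilityMeasure η] {Z : Ω' → H} (hZ : HasLaw Z G P') {X : ℕ → Ω → H} {d : ℕ} {v : H}
    (hX : ∀ n, AEMeasurable (X n) P) (hd : d ≠ 0)
    (hconv : ∀ n, P.map (X (n + d)) = P.map (X n) ∗ η) (hη : MemLp id 2 η)
    (hmean : ∫ x, x ∂η = (d : ℝ) • v) (hG : ∫ x, x ∂G = 0)
    (hcov : ∀ t, covarianceBilin η t t = d * covarianceBilin G t t) :
    TendstoInDistribution (fun (n : ℕ) ω => (√n)⁻¹ • (X n ω - (n : ℝ) • v)) atTop Z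
      (fun _ => P) P' where
  forall_aemeasurable n := by have := hX n; fun_prop
  aemeasurable_limit := hZ.aemeasurable
  tendsto := by
    have (n : ℕ) : IsProbabilityMeasure (P.map (X n)) := Measure.isProbabilityMeasure_map (hX n)
    refine ProbabilityMeasure.tendsto_iff_tendsto_charFun.2 fun t => ?_
    have hcharG : charFun G t = Complex.exp (-((d : ℝ)⁻¹ * covarianceBilin η t t / 2)) := by
      have : (d : ℂ) ≠ 0 := Nat.cast_ne_zero.2 hd
      simp [IsGaussian.charFun_eq', hG, hcov, this]
    have hcharX (n : ℕ) : charFun (P.map fun ω => (√n)⁻¹ • (X n ω - (n : ℝ) • v)) t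
        = charFun ((P.map (X n)).map (· - (n : ℝ) • v)) ((√n)⁻¹ • t) := by
      rw [charFun_map_smul_comp ((hX n).sub_const _),
        AEMeasurable.map_map_of_aemeasurable (by fun_prop) (hX n)]
      rfl
    simpa [hZ.map_eq, hcharX, hcharG] using
      tendsto_charFun_map_sub_of_add_eq_conv hd hconv hη hmean t

end CentralLimit

section Gaussian

lemma map_inner_multivariateGaussian {ι : Type*} [Fintype ι] [DecidableEq ι] {Γ : Matrix ι ι ℝ}
    (hΓ : Γ.PosSemidef) (m t : EuclideanSpace ℝ ι) :
    (multivariateGaussian m Γ).map (fun x => ⟪t, x⟫_ℝ)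
      = gaussianReal (⟪t, m⟫_ℝ) (t ⬝ᵥ Γ.mulVec t).toNNReal := by
  rw [← covarianceBilin_multivariateGaussian (μ := m) hΓ, covarianceBilin_self
    IsGaussian.memLp_two_id]
  refine (IsGaussian.map_eq_gaussianReal (innerSL ℝ t)).trans ?_
  congr 1
  exact (integral_inner (f := fun x => x) IsGaussian.integrable_id t).trans (by simp)

lemma isCenteredGaussian_multivariateGaussian {Γ : Matrix (Fin 3) (Fin 3) ℝ}
    (hΓ : Γ.PosSemidef) : IsCenteredGaussian (multivariateGaussian 0 Γ) Γ := by
  refine ⟨inferInstance, fun u => ?_⟩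
  convert map_inner_multivariateGaussian hΓ 0 (WithLp.toLp 2 u) using 2
  · simp [PiLp.inner_apply, mul_comm]
  · simp
  · simp [dotProduct, Matrix.mulVec, Finset.mul_sum, mul_assoc]

end Gaussian

section Lattice

lemma vec_apply (x y z : ℝ) (r : Fin 3) : vec x y z r = ![x, y, z] r := rfl

lemma vec_inj {x y z x' y' z' : ℝ} : vec x y z = vec x' y' z' ↔ x = x' ∧ y = y' ∧ z = z' := by
  refine ⟨fun h => ⟨congrArg (· 0) h, congrArg (· 1) h, congrArg (· 2) h⟩, ?_⟩
  rintro ⟨rfl, rfl, rfl⟩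
  rfl

lemma vec_add (x y z x' y' z' : ℝ) : vec x y z + vec x' y' z' = vec (x + x') (y + y') (z + z') := by
  ext r
  fin_cases r <;> simp [vec_apply]

lemma smul_vec (c x y z : ℝ) : c • vec x y z = vec (c * x) (c * y) (c * z) := by
  ext r
  fin_cases r <;> simp [vec_apply]

lemma inner_vec (t : E) (x y z : ℝ) : ⟪t, vec x y z⟫_ℝ = t 0 * x + t 1 * y + t 2 * z := by
  simp [PiLp.inner_apply, Fin.sum_univ_three, vec_apply, mul_comm]

lemma cos_two_mul_mul_pi_div_three (k : Fin 3) :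
    Real.cos (2 * (k : ℕ) * π / 3) = ![1, -(1 / 2), -(1 / 2)] k := by
  fin_cases k
  · simp
  · simp [show 2 * π / 3 = π - π / 3 by ring, Real.cos_pi_sub]
  · simp [show 2 * 2 * π / 3 = π / 3 + π by ring, Real.cos_add_pi]

lemma sin_two_mul_mul_pi_div_three (k : Fin 3) :
    Real.sin (2 * (k : ℕ) * π / 3) = ![0, √3 / 2, -(√3 / 2)] k := by
  fin_cases k
  · simp
  · simp [show 2 * π / 3 = π - π / 3 by ring, Real.sin_pi_sub]
  · simp [show 2 * 2 * π / 3 = π / 3 + π by ring, Real.sin_add_pi]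

lemma w_eq (a : ℝ) (i : Fin 2) (k : Fin 3) :
    w a i k = vec ((-1) ^ (i : ℕ) * a * ![1, -(1 / 2), -(1 / 2)] k)
      ((-1) ^ (i : ℕ) * a * ![0, √3 / 2, -(√3 / 2)] k) 0 := by
  rw [w, Real.cos_add_nat_mul_pi, Real.sin_add_nat_mul_pi, cos_two_mul_mul_pi_div_three,
    sin_two_mul_mul_pi_div_three]
  congr 1 <;> ring

lemma zero_mem_V (a h : ℝ) : (0 : E) ∈ V a h 0 0 := by
  refine ⟨0, 0, 0, ?_⟩
  ext r
  fin_cases r <;> simp [vec_apply]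

lemma add_w_mem_V {a h : ℝ} {i : Fin 2} {x : E} (hx : x ∈ V a h i i) (k : Fin 3) :
    x + w a i k ∈ V a h (i + 1) (i + 1) := by
  obtain ⟨j, l, n, rfl⟩ := hx
  refine ⟨j + (-1) ^ (i : ℕ) * ![0, -1, -1] k, l + (-1) ^ (i : ℕ) * ![0, 1, 0] k, n, ?_⟩
  rw [w_eq, vec_add, vec_inj]
  fin_cases i <;> fin_cases k <;> refine ⟨?_, ?_, ?_⟩ <;> simp <;> ring

lemma measurableSet_V (a h : ℝ) (i j : Fin 2) : MeasurableSet (V a h i j) := by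
  refine Set.Countable.measurableSet ((Set.countable_range (fun m : ℤ × ℤ × ℤ =>
    vec (a * ((-1 : ℝ) ^ ((i : ℕ) + 1) * (if j = 1 then (1 : ℝ) else 0) + (3 / 2) * m.1))
        (a * ((Real.sqrt 3 / 2) * m.1 + Real.sqrt 3 * m.2.1))
        (h * (2 * m.2.2 + (if i ≠ j then (1 : ℝ) else 0))))).mono ?_)
  rintro x ⟨k, l, n, rfl⟩
  exact ⟨(k, l, n), rfl⟩

lemma notMem_V_of_mem_V_self {a h : ℝ} (hh : 0 < h) {i i' j' : Fin 2} {x : E}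
    (hx : x ∈ V a h i i) (hne : i' ≠ j') : x ∉ V a h i' j' := by
  rintro ⟨k', l', n', h'⟩
  obtain ⟨k, l, n, rfl⟩ := hx
  have hz : 2 * (n : ℝ) = 2 * n' + 1 := by
    simpa [hne] using mul_left_cancel₀ hh.ne' (vec_inj.1 h').2.2
  norm_cast at hz
  omega

lemma notMem_V_one_of_mem_V_zero {a h : ℝ} (ha : 0 < a) {x : E} (hx : x ∈ V a h 0 0) :
    x ∉ V a h 1 1 := by
  rintro ⟨k', l', n', h'⟩
  obtain ⟨k, l, n, rfl⟩ := hx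
  have hx : 3 / 2 * (k : ℝ) = 1 + 3 / 2 * k' := by
    simpa using mul_left_cancel₀ ha.ne' (vec_inj.1 h').1
  have : 3 * (k : ℝ) = 2 + 3 * k' := by linarith
  norm_cast at this
  omega

lemma mem_V_iff_of_mem_V_self {a h : ℝ} (ha : 0 < a) (hh : 0 < h) {i i' j' : Fin 2} {x : E}
    (hx : x ∈ V a h i i) : x ∈ V a h i' j' ↔ i' = i ∧ j' = i := by
  refine ⟨fun hx' => ?_, fun ⟨hi, hj⟩ => hi ▸ hj ▸ hx⟩
  obtain rfl : i' = j' := by_contra fun hne => notMem_V_of_mem_V_self hh hx hne hx'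
  fin_cases i <;> fin_cases i'
  · exact ⟨rfl, rfl⟩
  · exact absurd hx' (notMem_V_one_of_mem_V_zero ha hx)
  · exact absurd hx (notMem_V_one_of_mem_V_zero ha hx')
  · exact ⟨rfl, rfl⟩

lemma indicator_V_of_mem_V_self {a h : ℝ} (ha : 0 < a) (hh : 0 < h) {i : Fin 2} {x : E}
    (hx : x ∈ V a h i i) (i' j' : Fin 2) :
    (V a h i' j').indicator (fun _ => (1 : ℝ)) x = if i' = i ∧ j' = i then 1 else 0 := by
  classical
  rw [Set.indicator_apply]
  simp only [mem_V_iff_of_mem_V_self ha hh hx]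

end Lattice

section Walk

/-- The law of a horizontal jump from a vertex of `V_{i,i}`. -/
def jumpLaw (a : ℝ) (q : Fin 2 → Fin 2 → Fin 3 → ℝ) (i : Fin 2) : Measure E :=
  discreteLaw (q i i) (w a i)

lemma isProbabilityMeasure_jumpLaw (a : ℝ) {q : Fin 2 → Fin 2 → Fin 3 → ℝ} {i : Fin 2}
    (hq : ∀ k, 0 ≤ q i i k) (h1 : ∑ k, q i i k = 1) : IsProbabilityMeasure (jumpLaw a q i) :=
  isProbabilityMeasure_discreteLaw hq h1

variable {Ω : Type} [MeasurableSpace Ω] {P : Measure Ω} {a h α : ℝ}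
  {q : Fin 2 → Fin 2 → Fin 3 → ℝ} {S : ℕ → Ω → E} {F : ℕ → MeasurableSpace Ω}

lemma IsRWG.filtration_le {p : ℝ} (hRW : IsRWG P a h p α q S F) (n : ℕ) :
    F n ≤ ‹MeasurableSpace Ω› := by
  rw [hRW.hF n]
  exact Measurable.comap_le (measurable_pi_lambda _ fun k => (hRW.hSmeas _).sub (hRW.hSmeas _))

lemma IsRWG.sum_q_eq_one (hRW : IsRWG P a h 0 α q S F) (i j : Fin 2) : ∑ k, q i j k = 1 := by
  rw [Fin.sum_univ_three]
  fin_cases j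
  · simpa using hRW.hqsum0 i
  · exact hRW.hqsum1 i

lemma IsRWG.integral_succ (hRW : IsRWG P a h 0 α q S F) {n : ℕ} {i : Fin 2}
    (hn : ∀ᵐ ω ∂P, S n ω ∈ V a h i i) {f : E → ℝ} (hf : Measurable f)
    (hfb : ∃ C, ∀ x, |f x| ≤ C) :
    ∫ ω, f (S (n + 1) ω) ∂P = ∫ ω, ∑ k, q i i k * f (S n ω + w a i k) ∂P := by
  have := hRW.prob
  rw [← integral_condExp (hRW.filtration_le n), integral_congr_ae (hRW.hTrans n f hf hfb)]
  refine integral_congr_ae ?_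
  filter_upwards [hn] with ω hω
  simp only [indicator_V_of_mem_V_self hRW.ha hRW.hh hω, Fin.sum_univ_two]
  fin_cases i <;> simp

lemma IsRWG.map_succ (hRW : IsRWG P a h 0 α q S F) {n : ℕ} {i : Fin 2}
    (hn : ∀ᵐ ω ∂P, S n ω ∈ V a h i i) :
    P.map (S (n + 1)) = P.map (S n) ∗ jumpLaw a q i := by
  have := hRW.prob
  have (m : ℕ) : IsProbabilityMeasure (P.map (S m)) :=
    Measure.isProbabilityMeasure_map (hRW.hSmeas m).aemeasurable
  have := isProbabilityMeasure_jumpLaw a (hRW.hq i i) (hRW.sum_q_eq_one i i)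
  refine ext_of_forall_integral_eq_of_IsFiniteMeasure fun f => ?_
  have hjump (x : E) : ∫ y, f (x + y) ∂jumpLaw a q i = ∑ k, q i i k * f (x + w a i k) :=
    integral_discreteLaw (hRW.hq i i) _
  rw [integral_conv (f.integrable _), integral_congr_ae (.of_forall hjump),
    integral_map (hRW.hSmeas _).aemeasurable (by fun_prop),
    integral_map (hRW.hSmeas _).aemeasurable (by fun_prop),
    hRW.integral_succ hn f.continuous.measurable ⟨‖f‖, f.norm_coe_le_norm⟩]

lemma IsRWG.ae_mem_V_succ (hRW : IsRWG P a h 0 α q S F) {n : ℕ} {i : Fin 2}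
    (hn : ∀ᵐ ω ∂P, S n ω ∈ V a h i i) : ∀ᵐ ω ∂P, S (n + 1) ω ∈ V a h (i + 1) (i + 1) := by
  have := hRW.prob
  have := isProbabilityMeasure_jumpLaw a (hRW.hq i i) (hRW.sum_q_eq_one i i)
  have hV := measurableSet_V a h
  have hjump : ∀ᵐ y ∂jumpLaw a q i, y ∈ range (w a i) := ae_discreteLaw mem_range_self
  have hmap : ∀ᵐ z ∂P.map (S (n + 1)), z ∈ V a h (i + 1) (i + 1) := by
    rw [hRW.map_succ hn]
    refine ae_mem_conv (hV _ _) (fun x hx => ?_)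
      ((ae_map_iff (hRW.hSmeas n).aemeasurable (hV _ _)).2 hn) hjump
    rintro _ ⟨k, rfl⟩
    exact add_w_mem_V hx k
  exact ae_of_ae_map (hRW.hSmeas _).aemeasurable hmap

lemma IsRWG.exists_ae_mem_V (hRW : IsRWG P a h 0 α q S F) (n : ℕ) :
    ∃ i, ∀ᵐ ω ∂P, S n ω ∈ V a h i i := by
  induction n with
  | zero => exact ⟨0, .of_forall fun ω => hRW.hS0 ω ▸ zero_mem_V a h⟩
  | succ n ih => exact ih.imp' _ fun _ => hRW.ae_mem_V_succ

lemma IsRWG.map_add_two (hRW : IsRWG P a h 0 α q S F) (n : ℕ) :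
    P.map (S (n + 2)) = P.map (S n) ∗ (jumpLaw a q 0 ∗ jumpLaw a q 1) := by
  have := hRW.prob
  have (i : Fin 2) := isProbabilityMeasure_jumpLaw a (hRW.hq i i) (hRW.sum_q_eq_one i i)
  obtain ⟨i, hi⟩ := hRW.exists_ae_mem_V n
  have hcomm : ∀ i : Fin 2, jumpLaw a q i ∗ jumpLaw a q (i + 1) = jumpLaw a q 0 ∗ jumpLaw a q 1 :=
    Fin.forall_fin_two.2 ⟨rfl, Measure.conv_comm _ _⟩
  rw [hRW.map_succ (hRW.ae_mem_V_succ hi), hRW.map_succ hi, Measure.conv_assoc, hcomm]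

end Walk

section Moments

variable {q : Fin 2 → Fin 2 → Fin 3 → ℝ}

lemma memLp_id_jumpLaw (a : ℝ) (q : Fin 2 → Fin 2 → Fin 3 → ℝ) (i : Fin 2) (r : ENNReal) :
    MemLp id r (jumpLaw a q i) :=
  memLp_id_discreteLaw _ _ _

lemma eq_one_sub_uu {i j : Fin 2} (h1 : ∑ k, q i j k = 1) : q i j 0 = 1 - uu q i j := by
  rw [Fin.sum_univ_three] at h1
  rw [uu]
  linarith

variable {i : Fin 2}

lemma integral_jumpLaw (a : ℝ) (hq : ∀ k, 0 ≤ q i i k) (h1 : ∑ k, q i i k = 1) :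
    ∫ x, x ∂jumpLaw a q i
      = (-1 : ℝ) ^ (i : ℕ) • vec (a * (1 - 3 / 2 * uu q i i)) (a * (√3 / 2) * vv q i i) 0 := by
  rw [jumpLaw, integral_discreteLaw hq]
  simp only [Fin.sum_univ_three, eq_one_sub_uu h1, w_eq, smul_vec, vec_add, vec_inj, uu, vv,
    Matrix.cons_val]
  exact ⟨by ring, by ring, by ring⟩

lemma covarianceBilin_jumpLaw_self (a : ℝ) (hq : ∀ k, 0 ≤ q i i k) (h1 : ∑ k, q i i k = 1)
    (t : E) :
    covarianceBilin (jumpLaw a q i) t t = a ^ 2 * (9 / 4 * ss q i i * t 0 ^ 2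
      + 3 * √3 / 2 * tt q i i * t 0 * t 1 + 3 / 4 * (uu q i i - vv q i i ^ 2) * t 1 ^ 2) := by
  have h3 : √3 ^ 2 = 3 := Real.sq_sqrt zero_le_three
  rw [jumpLaw, covarianceBilin_discreteLaw_self hq h1]
  simp only [Fin.sum_univ_three, w_eq, inner_vec, eq_one_sub_uu h1, ss, tt, uu, vv,
    Matrix.cons_val]
  rcases neg_one_pow_eq_or ℝ (i : ℕ) with hi | hi <;> rw [hi] <;>
    linear_combination a ^ 2 / 4 * (q i i 1 + q i i 2 - (q i i 1 - q i i 2) ^ 2) * t 1 ^ 2 * h3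

lemma integral_jumpLaw_conv (a h α : ℝ) (hq : ∀ i k, 0 ≤ q i i k) (h1 : ∀ i, ∑ k, q i i k = 1) :
    ∫ x, x ∂(jumpLaw a q 0 ∗ jumpLaw a q 1) = (2 : ℝ) • (muG a h 0 α q + rhoG a 0 q) := by
  have (i : Fin 2) := isProbabilityMeasure_jumpLaw a (hq i) (h1 i)
  have hint (i : Fin 2) : Integrable id (jumpLaw a q i) :=
    memLp_one_iff_integrable.1 (memLp_id_jumpLaw a q i 1)
  rw [integral_id_conv (hint 0) (hint 1), integral_jumpLaw a (hq 0) (h1 0),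
    integral_jumpLaw a (hq 1) (h1 1)]
  simp only [muG, rhoG, smul_vec, vec_add, vec_inj, Fin.val_zero, Fin.val_one]
  exact ⟨by ring, by ring, by ring⟩

lemma covarianceBilin_jumpLaw_conv_self (a h α : ℝ) (hq : ∀ i k, 0 ≤ q i i k)
    (h1 : ∀ i, ∑ k, q i i k = 1) (t : E) :
    covarianceBilin (jumpLaw a q 0 ∗ jumpLaw a q 1) t t
      = 2 * (t ⬝ᵥ (sigmaG a h 0 α q + deltaG a h 0 α q).mulVec t) := by
  have (i : Fin 2) := isProbabilityMeasure_jumpLaw a (hq i) (h1 i)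
  rw [covarianceBilin_conv_self (memLp_id_jumpLaw a q 0 2) (memLp_id_jumpLaw a q 1 2),
    covarianceBilin_jumpLaw_self a (hq 0) (h1 0),
    covarianceBilin_jumpLaw_self a (hq 1) (h1 1)]
  simp only [dotProduct, Matrix.mulVec, Fin.sum_univ_three, sigmaG, deltaG, Matrix.add_apply,
    Matrix.of_apply, Matrix.cons_val]
  ring

lemma posSemidef_sigmaG_add_deltaG (a h α : ℝ) (hq : ∀ i k, 0 ≤ q i i k)
    (h1 : ∀ i, ∑ k, q i i k = 1) : (sigmaG a h 0 α q + deltaG a h 0 α q).PosSemidef := by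
  refine Matrix.PosSemidef.of_dotProduct_mulVec_nonneg ?_ fun x => ?_
  · ext r c
    fin_cases r <;> fin_cases c <;> simp [sigmaG, deltaG]
  · have := covarianceBilin_jumpLaw_conv_self a h α hq h1 (WithLp.toLp 2 x)
    rw [star_trivial]
    linarith [covarianceBilin_self_nonneg (μ := jumpLaw a q 0 ∗ jumpLaw a q 1) (WithLp.toLp 2 x)]

end Moments

end RWG

theorem rwg_clt_p_zero {Ω : Type} [MeasurableSpace Ω] (P : Measure Ω)
    (a h p α : ℝ) (q : Fin 2 → Fin 2 → Fin 3 → ℝ)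
    (S : ℕ → Ω → RWG.E) (F : ℕ → MeasurableSpace Ω)
    (hRW : RWG.IsRWG P a h p α q S F) (hp : p = 0) :
    ∃ G : Measure RWG.E,
      RWG.IsCenteredGaussian G (RWG.sigmaG a h p α q + RWG.deltaG a h p α q) ∧
      ∀ f : RWG.E → ℝ, Continuous f → (∃ C, ∀ x, |f x| ≤ C) →
        Tendsto
          (fun n : ℕ => ∫ ω, f ((Real.sqrt n)⁻¹ •
            (S n ω - (n : ℝ) • (RWG.muG a h p α q + RWG.rhoG a p q))) ∂P)
          atTop (nhds (∫ x, f x ∂G)) := by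
  subst hp
  have := hRW.prob
  have hq i := hRW.hq i i
  have h1 i := hRW.sum_q_eq_one i i
  have (i : Fin 2) := RWG.isProbabilityMeasure_jumpLaw a (hq i) (h1 i)
  have hΓ := RWG.posSemidef_sigmaG_add_deltaG a h α hq h1
  refine ⟨_, RWG.isCenteredGaussian_multivariateGaussian hΓ, fun f hf ⟨C, hC⟩ => ?_⟩
  have hclt := RWG.tendstoInDistribution_inv_sqrt_smul_sub HasLaw.id
    (fun n => (hRW.hSmeas n).aemeasurable) two_ne_zero hRW.map_add_two
    (RWG.memLp_id_conv (RWG.memLp_id_jumpLaw a q 0 2) (RWG.memLp_id_jumpLaw a q 1 2))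
    (RWG.integral_jumpLaw_conv a h α hq h1) integral_id_multivariateGaussian fun t => by
      rw [RWG.covarianceBilin_jumpLaw_conv_self a h α hq h1, Nat.cast_ofNat,
        covarianceBilin_multivariateGaussian hΓ]
  exact RWG.tendsto_integral_comp_of_tendstoInDistribution hclt
    (BoundedContinuousFunction.ofNormedAddCommGroup f hf C hC)
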